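/- arXiv:0705.4618 — 2 statements merged into one kernel-verified Lean document; each statement's English description precedes it below -/
import Mathlib

section
/- Let G = (𝒩, w) be a closed octagonal graph. Define w_S : 𝒩 × 𝒩 → ℚ∞ by w_S(i,j) = min{ w(i,j), w(i,ī)/2 + w(j̄,j)/2 }. Then w_S is the strong closure of G: w_S is a strongly closed octagonal graph with w_S ⊴ w, and every strongly closed octagonal graph w′ with w′ ⊴ w satisfies w′ ⊴ w_S. -/
/-- Extended rationals: ℚ ∪ {+∞}. -/
abbrev Qinf := WithTop ℚ

/-- Weight of a path (list of nodes): sum of the weights of its arcs. -/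
def pathWeight {N : Type*} (w : N → N → Qinf) : List N → Qinf
  | [] => 0
  | [_] => 0
  | a :: b :: l => w a b + pathWeight w (b :: l)

/-- A proper cycle: at least two arcs, first node equals last node,
    consecutive nodes distinct. -/
def IsProperCycle {N : Type*} (l : List N) : Prop :=
  3 ≤ l.length ∧ l.head? = l.getLast? ∧ l.Chain' (· ≠ ·)

/-- A graph is consistent if it has no proper cycle of negative weight. -/
def Consistent {N : Type*} (w : N → N → Qinf) : Prop :=
  ∀ l : List N, IsProperCycle l → 0 ≤ pathWeight w l

/-- A consistent graph is closed if self-loops have weight 0 and the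
    triangle inequality holds. -/
def ClosedG {N : Type*} (w : N → N → Qinf) : Prop :=
  Consistent w ∧ (∀ i, w i i = 0) ∧ ∀ i j k, w i j ≤ w i k + w k j

/-- The "bar" involution on nodes: ī = i+1 for even i, ī = i-1 for odd i. -/
def bar {n : ℕ} (i : Fin (2 * n)) : Fin (2 * n) :=
  if _h : i.val % 2 = 0 then ⟨i.val + 1, by have := i.isLt; omega⟩
  else ⟨i.val - 1, by have := i.isLt; omega⟩

/-- Coherence: w(i,j) = w(j̄,ī). -/
def Coherent {n : ℕ} (w : Fin (2 * n) → Fin (2 * n) → Qinf) : Prop :=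
  ∀ i j, w i j = w (bar j) (bar i)

/-- An octagonal graph: consistent and coherent. -/
def Octagonal {n : ℕ} (w : Fin (2 * n) → Fin (2 * n) → Qinf) : Prop :=
  Consistent w ∧ Coherent w

/-- Pointwise order on graphs. -/
def GLe {n : ℕ} (w₁ w₂ : Fin (2 * n) → Fin (2 * n) → Qinf) : Prop :=
  ∀ i j, w₁ i j ≤ w₂ i j

/-- Halving on ℚ∞ (with +∞/2 = +∞). -/
def half (x : Qinf) : Qinf := x.map (fun q => q / 2)

/-- Floored halving on ℚ∞ (with ⌊+∞/2⌋ = +∞). -/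
def fhalf (x : Qinf) : Qinf := x.map (fun q => ((⌊q / 2⌋ : ℤ) : ℚ))

/-- Integer weights: every weight is an integer or +∞. -/
def IntWeights {n : ℕ} (w : Fin (2 * n) → Fin (2 * n) → Qinf) : Prop :=
  ∀ i j, w i j = ⊤ ∨ ∃ d : ℤ, w i j = ((d : ℚ) : Qinf)

/-- A strongly closed octagonal graph. -/
def StronglyClosed {n : ℕ} (w : Fin (2 * n) → Fin (2 * n) → Qinf) : Prop :=
  Octagonal w ∧ ClosedG w ∧ ∀ i j, 2 * w i j ≤ w i (bar i) + w (bar j) j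

/-- A tightly closed integer octagonal graph. -/
def TightlyClosed {n : ℕ} (w : Fin (2 * n) → Fin (2 * n) → Qinf) : Prop :=
  IntWeights w ∧ StronglyClosed w ∧
    ∀ i, w i (bar i) = ⊤ ∨ ∃ d : ℤ, w i (bar i) = (((2 * d : ℤ) : ℚ) : Qinf)


theorem bar_bar' {n : ℕ} (i : Fin (2 * n)) : bar (bar i) = i := by
  have key : ∀ j : Fin (2 * n), (bar j).val = if j.val % 2 = 0 then j.val + 1 else j.val - 1 := by
    intro j
    unfold bar
    split_ifs <;> rfl
  apply Fin.ext
  rw [key, key]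
  split_ifs <;> omega

theorem half_add_half (x : Qinf) : half x + half x = x := by
  induction x using WithTop.recTopCoe with
  | top => rfl
  | coe q =>
    change (((q / 2 : ℚ) : Qinf) + ((q / 2 : ℚ) : Qinf)) = _
    rw [← WithTop.coe_add]
    congr 1
    ring

theorem two_mul_qinf (x : Qinf) : 2 * x = x + x := by
  induction x using WithTop.recTopCoe with
  | top => exact WithTop.mul_top (by norm_num)
  | coe q =>
    change (((2 : ℚ) : Qinf) * (q : Qinf)) = _
    rw [← WithTop.coe_add, ← WithTop.coe_mul]
    congr 1
    ring

theorem le_of_double {a b : Qinf} (h : a + a ≤ b + b) : a ≤ b := by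
  induction b using WithTop.recTopCoe with
  | top => exact le_top
  | coe q =>
    induction a using WithTop.recTopCoe with
    | top => simp [← WithTop.coe_add] at h
    | coe p =>
      rw [← WithTop.coe_add, ← WithTop.coe_add, WithTop.coe_le_coe] at h
      rw [WithTop.coe_le_coe]
      linarith

theorem path_ge {N : Type*} (w : N → N → Qinf) (h0 : ∀ i, w i i = 0)
    (ht : ∀ i j k, w i j ≤ w i k + w k j) (l : List N) :
    ∀ a b, (a :: l).getLast? = some b → w a b ≤ pathWeight w (a :: l) := by
  induction l with
  | nil =>
    intro a b h
    simp at h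
    subst h
    simp [pathWeight, h0]
  | cons c l ih =>
    intro a b h
    rw [List.getLast?_cons_cons] at h
    have := ih c b h
    change _ ≤ w a c + pathWeight w (c :: l)
    exact (ht a b c).trans (by gcongr)

theorem consistent_of {N : Type*} (w : N → N → Qinf) (h0 : ∀ i, w i i = 0)
    (ht : ∀ i j k, w i j ≤ w i k + w k j) : Consistent w := by
  rintro l ⟨h1, h2, -⟩
  cases l with
  | nil => simp at h1
  | cons a l =>
    have := path_ge w h0 ht l a a (by rw [← h2]; rfl)
    rwa [h0] at this

/-- For a closed octagonal graph, a single application of the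
    strong-coherence inference rule yields the strong closure. -/
theorem strong_closure_of_closed_octagonal
    {n : ℕ} (hn : 1 ≤ n) (w : Fin (2 * n) → Fin (2 * n) → Qinf)
    (hoct : Octagonal w) (hcl : ClosedG w)
    (wS : Fin (2 * n) → Fin (2 * n) → Qinf)
    (hwS : ∀ i j, wS i j = min (w i j) (half (w i (bar i)) + half (w (bar j) j))) :
    StronglyClosed wS ∧ GLe wS w ∧
      ∀ w' : Fin (2 * n) → Fin (2 * n) → Qinf,
        StronglyClosed w' → GLe w' w → GLe w' wS := by
  obtain ⟨-, hco⟩ := hoct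
  obtain ⟨-, h0, ht⟩ := hcl
  have hu : ∀ i k, half (w i (bar i)) ≤ w i k + half (w k (bar k)) := by
    intro i k
    apply le_of_double
    rw [half_add_half, add_add_add_comm, half_add_half]
    calc w i (bar i) ≤ w i k + w k (bar i) := ht _ _ _
      _ ≤ w i k + (w k (bar k) + w (bar k) (bar i)) := by gcongr; exact ht _ _ _
      _ = _ := by rw [← hco i k]; ac_rfl
  have hv : ∀ k j, half (w (bar j) j) ≤ half (w (bar k) k) + w k j := by
    intro k j
    have := hu (bar j) (bar k)
    rw [bar_bar', bar_bar', ← hco k j] at this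
    rwa [add_comm]
  have huv : ∀ k, 0 ≤ half (w k (bar k)) + half (w (bar k) k) := by
    intro k
    apply le_of_double
    rw [add_add_add_comm, half_add_half, half_add_half, add_zero, ← h0 k]
    exact ht _ _ _
  have S0 : ∀ i, wS i i = 0 := by
    intro i
    rw [hwS, h0]
    exact min_eq_left (huv i)
  have St : ∀ i j k, wS i j ≤ wS i k + wS k j := by
    intro i j k
    rw [hwS i k, hwS k j]
    have A : wS i j ≤ w i j := by rw [hwS]; exact min_le_left _ _
    have B : wS i j ≤ half (w i (bar i)) + half (w (bar j) j) := by
      rw [hwS]; exact min_le_right _ _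
    rcases min_choice (w i k) (half (w i (bar i)) + half (w (bar k) k)) with e | e <;>
    rcases min_choice (w k j) (half (w k (bar k)) + half (w (bar j) j)) with f | f <;>
    rw [e, f]
    · exact A.trans (ht _ _ _)
    · refine B.trans ?_
      rw [← add_assoc]
      gcongr
      exact hu _ _
    · refine B.trans ?_
      rw [add_assoc]
      gcongr
      exact hv _ _
    · refine B.trans ?_
      calc half (w i (bar i)) + half (w (bar j) j)
          = half (w i (bar i)) + half (w (bar j) j) + 0 := (add_zero _).symm
        _ ≤ half (w i (bar i)) + half (w (bar j) j)
            + (half (w k (bar k)) + half (w (bar k) k)) := by gcongr; exact huv k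
        _ = _ := by ac_rfl
  have Sc := consistent_of wS S0 St
  have Sb : ∀ i, wS i (bar i) = w i (bar i) := by
    intro i
    rw [hwS, bar_bar', half_add_half, min_self]
  refine ⟨⟨⟨Sc, ?_⟩, ⟨Sc, S0, St⟩, ?_⟩, ?_, ?_⟩
  · intro i j
    rw [hwS, hwS, bar_bar', bar_bar', ← hco i j, add_comm]
  · intro i j
    have hj := Sb (bar j)
    rw [bar_bar'] at hj
    rw [Sb, hj, two_mul_qinf]
    have B : wS i j ≤ half (w i (bar i)) + half (w (bar j) j) := by
      rw [hwS]; exact min_le_right _ _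
    refine (add_le_add B B).trans ?_
    rw [add_add_add_comm, half_add_half, half_add_half]
  · intro i j
    rw [hwS]; exact min_le_left _ _
  · rintro w' ⟨-, -, hs⟩ hle i j
    rw [hwS]
    refine le_min (hle i j) (le_of_double ?_)
    rw [add_add_add_comm, half_add_half, half_add_half, ← two_mul_qinf]
    exact (hs i j).trans (add_le_add (hle _ _) (hle _ _))
end

section
/- Let G = (𝒩, w) be an octagonal graph and let w★ be its shortest-path closure, i.e., the pointwise supremum of all closed graphs w′ with w′ ⊴ w. If (z₁, z₂) is an arc of w★ (i.e., w★(z₁,z₂) < +∞), then there exists a simple path π from z₁ to z₂ in G such that w★(z₁, z₂) = w(π). -/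
theorem le_pathWeight_aux {N : Type*} (w f : N → N → Qinf) (j k : N)
    (h : ∀ a b, f a j ≤ w a b + f b j) :
    ∀ (l : List N) (i : N), l.head? = some i → l.getLast? = some k →
      f i j ≤ pathWeight w l + f k j
  | [], i, h1, _ => by simp at h1
  | [a], i, h1, h2 => by
      simp at h1 h2
      subst h1; subst h2
      simp [pathWeight]
  | a :: b :: l, i, h1, h2 => by
      simp only [List.head?_cons, Option.some.injEq] at h1
      subst h1
      have ih := le_pathWeight_aux w f j k h (b :: l) b rfl (by simpa using h2)
      rw [pathWeight, add_assoc]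
      exact (h a b).trans (add_le_add_right ih _)

theorem pathWeight_append_cons {N : Type*} (w : N → N → Qinf) (x : N) (s : List N) :
    ∀ p : List N, pathWeight w (p ++ x :: s) = pathWeight w (p ++ [x]) + pathWeight w (x :: s)
  | [] => by simp [pathWeight]
  | [a] => by simp [pathWeight]
  | a :: b :: l => by
      have ih := pathWeight_append_cons w x s (b :: l)
      simp only [List.cons_append, pathWeight] at ih ⊢
      rw [ih, add_assoc]

theorem pathWeight_chain {N : Type*} (w : N → N → Qinf) :
    ∀ l : List N, pathWeight w l < ⊤ → l.IsChain (fun a b => w a b < ⊤)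
  | [], _ => by simp
  | [a], _ => by simp
  | a :: b :: l, h => by
      rw [pathWeight, WithTop.add_lt_top] at h
      exact List.isChain_cons_cons.2 ⟨h.1, pathWeight_chain w (b :: l) h.2⟩

theorem pathWeight_mono {N : Type*} (w u : N → N → Qinf) (h : ∀ i j, u i j ≤ w i j) :
    ∀ l : List N, pathWeight u l ≤ pathWeight w l
  | [] => by simp [pathWeight]
  | [a] => by simp [pathWeight]
  | a :: b :: l => by
      rw [pathWeight, pathWeight]
      exact add_le_add (h a b) (pathWeight_mono w u h (b :: l))

/-- Adding one arc in front of a simple path can be shortcut to a simple path. -/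
theorem step_simple {N : Type*} (w : N → N → Qinf) (hc : Consistent w)
    (h0 : ∀ i, 0 ≤ w i i) (a b j : N) (l : List N) (hl : l.Nodup) (h1 : l.head? = some b)
    (h2 : l.getLast? = some j) :
    ∃ l' : List N, l'.Nodup ∧ l'.head? = some a ∧ l'.getLast? = some j ∧
      pathWeight w l' ≤ w a b + pathWeight w l := by
  by_cases ha : a ∈ l
  · obtain ⟨p, s, rfl⟩ := List.append_of_mem ha
    refine ⟨a :: s, (List.nodup_append.1 hl).2.1, rfl, ?_, ?_⟩
    · simpa using h2
    · rw [pathWeight_append_cons, ← add_assoc]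
      refine le_add_of_nonneg_left ?_
      cases p with
      | nil =>
        simp only [List.nil_append, List.head?_cons, Option.some.injEq] at h1
        subst h1
        simpa [pathWeight] using h0 a
      | cons c p =>
        simp only [List.cons_append, List.head?_cons, Option.some.injEq] at h1
        subst h1
        have hcyc := hc (a :: c :: (p ++ [a])) ⟨by simp, by simp [List.getLast?_cons], ?_⟩
        · simpa [pathWeight] using hcyc
        · have hn : (c :: (p ++ [a])).Nodup := by
            have : ((c :: p) ++ [a]).Nodup := by
              refine hl.sublist ?_
              simp
            simpa using this
          have hac : a ≠ c := by
            rintro rfl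
            simp at hn
          exact List.isChain_cons_cons.2 ⟨hac, hn.isChain⟩
  · cases l with
    | nil => simp at h1
    | cons c l =>
      simp only [List.head?_cons, Option.some.injEq] at h1
      subst h1
      exact ⟨a :: c :: l, List.nodup_cons.2 ⟨ha, hl⟩, rfl, by simpa using h2, le_rfl⟩

theorem exists_dist {N : Type*} [Finite N] (w : N → N → Qinf) (i j : N) :
    ∃ l : List N, (l.Nodup ∧ l.head? = some i ∧ l.getLast? = some j) ∧
      ∀ l' : List N, (l'.Nodup ∧ l'.head? = some i ∧ l'.getLast? = some j) →
        pathWeight w l ≤ pathWeight w l' := by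
  classical
  have := Fintype.ofFinite N
  have hfin : {l : List N | l.Nodup ∧ l.head? = some i ∧ l.getLast? = some j}.Finite :=
    (List.finite_length_le N (Fintype.card N)).subset
      fun l hl => hl.1.length_le_card
  have hne : {l : List N | l.Nodup ∧ l.head? = some i ∧ l.getLast? = some j}.Nonempty := by
    by_cases h : i = j
    · exact ⟨[i], by simp [h]⟩
    · exact ⟨[i, j], by simp [h]⟩
  obtain ⟨l, hl, hm⟩ := Set.exists_min_image _ (pathWeight w) hfin hne
  exact ⟨l, hl, fun l' h' => hm l' h'⟩

/-- Any finite entry of the shortest-path closure of an octagonal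
    graph is realized by the weight of a simple path in the original graph. -/
theorem closure_arc_realized_by_simple_path
    {n : ℕ} (hn : 1 ≤ n) (w : Fin (2 * n) → Fin (2 * n) → Qinf)
    (hoct : Octagonal w)
    (wstar : Fin (2 * n) → Fin (2 * n) → Qinf)
    (hstar : ∀ i j, IsLUB
      {q : Qinf | ∃ w' : Fin (2 * n) → Fin (2 * n) → Qinf,
        ClosedG w' ∧ GLe w' w ∧ q = w' i j} (wstar i j))
    (z₁ z₂ : Fin (2 * n)) (harc : wstar z₁ z₂ < ⊤) :
    ∃ π : List (Fin (2 * n)),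
      π.Chain' (fun a b => w a b < ⊤) ∧ π.head? = some z₁ ∧
        π.getLast? = some z₂ ∧ π.Nodup ∧ wstar z₁ z₂ = pathWeight w π := by
  have h0 : ∀ i, 0 ≤ w i i := by
    intro i
    by_contra hneg
    have hempty : ∀ q, q ∈ {q : Qinf | ∃ w' : Fin (2 * n) → Fin (2 * n) → Qinf,
        ClosedG w' ∧ GLe w' w ∧ q = w' z₁ z₂} → False := by
      rintro q ⟨w', hw', hle, -⟩
      exact hneg ((hw'.2.1 i) ▸ hle i i)
    have hs := (hstar z₁ z₂).2
    obtain ⟨q, hq⟩ := WithTop.ne_top_iff_exists.1 harc.ne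
    have : wstar z₁ z₂ ≤ ((q - 1 : ℚ) : Qinf) := hs fun x hx => (hempty x hx).elim
    rw [← hq, WithTop.coe_le_coe] at this
    linarith
  choose P hP hmin using exists_dist w
  let d : Fin (2 * n) → Fin (2 * n) → Qinf := fun i j => pathWeight w (P i j)
  have hd0 : ∀ i, d i i = 0 := by
    intro i
    have h := hP i i
    show pathWeight w (P i i) = 0
    generalize P i i = l at h
    rcases l with _ | ⟨a, _ | ⟨b, l⟩⟩
    · rfl
    · rfl
    · exfalso
      obtain ⟨hn, h1, h2⟩ := h
      simp only [List.head?_cons, Option.some.injEq] at h1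
      subst h1
      have : a ∈ b :: l := List.mem_of_getLast? (by simpa using h2)
      exact (List.nodup_cons.1 hn).1 this
  have hstep : ∀ j a b, d a j ≤ w a b + d b j := by
    intro j a b
    obtain ⟨l', hn, h1, h2, hle⟩ := step_simple w hoct.1 h0 a b j (P b j) (hP b j).1
      (hP b j).2.1 (hP b j).2.2
    exact (hmin a j l' ⟨hn, h1, h2⟩).trans hle
  have htri : ∀ i j k, d i j ≤ d i k + d k j := fun i j k =>
    le_pathWeight_aux w d j k (hstep j) (P i k) i (hP i k).2.1 (hP i k).2.2
  have hcons : Consistent d := by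
    rintro l ⟨hlen, hhl, -⟩
    cases l with
    | nil => simp at hlen
    | cons a l =>
      have := le_pathWeight_aux d d a a (fun x y => htri x a y) (a :: l) a rfl
        (by rw [← hhl]; rfl)
      simpa [hd0] using this
  have hdw : GLe d w := by
    intro i j
    have := hstep j i j
    simpa [hd0] using this
  have hgr : ∀ w' : Fin (2 * n) → Fin (2 * n) → Qinf, ClosedG w' → GLe w' w →
      ∀ i j, w' i j ≤ d i j := by
    intro w' hw' hle i j
    have := le_pathWeight_aux w' w' j j (fun x y => hw'.2.2 x j y) (P i j) i (hP i j).2.1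
      (hP i j).2.2
    rw [hw'.2.1, add_zero] at this
    exact this.trans (pathWeight_mono w w' hle _)
  have heq : wstar z₁ z₂ = d z₁ z₂ := by
    apply le_antisymm
    · apply (hstar z₁ z₂).2
      rintro q ⟨w', hw', hle, rfl⟩
      exact hgr w' hw' hle z₁ z₂
    · exact (hstar z₁ z₂).1 ⟨d, ⟨hcons, hd0, htri⟩, hdw, rfl⟩
  refine ⟨P z₁ z₂, ?_, (hP z₁ z₂).2.1, (hP z₁ z₂).2.2, (hP z₁ z₂).1, heq⟩
  exact pathWeight_chain w _ (lt_of_eq_of_lt heq.symm harc)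
end
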